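/- Let $\zeta = e^{2\pi i/3} \in \mathbb{C}$ and let $q(x_1,x_2,x_3) = \zeta^2 x_1 x_2 + \zeta x_1 x_3 + x_2 x_3$. Then $q$ vanishes at the five points $[0:0:1]$, $[1:0:0]$, $[0:1:0]$, $[1:1:1]$, $[\zeta:1:\zeta^2]$ of $\mathbb{P}^2(\mathbb{C})$, and every homogeneous polynomial of degree $2$ in $\mathbb{C}[x_1,x_2,x_3]$ vanishing at all five of these points is a scalar multiple of $q$. In particular, $q = 0$ is the unique conic through these five points. -/

import Mathlib

open MvPolynomial

/-- ζ = e^{2πi/3}, a primitive cube root of unity. -/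
noncomputable def hesseZeta' : ℂ := Complex.exp (2 * Real.pi * Complex.I / 3)

/-- The quadratic form q(x₁,x₂,x₃) = ζ² x₁x₂ + ζ x₁x₃ + x₂x₃ of Example 5.1. -/
noncomputable def hesseConic : MvPolynomial (Fin 3) ℂ :=
  C (hesseZeta' ^ 2) * X 0 * X 1 + C hesseZeta' * X 0 * X 2 + X 1 * X 2

/-- Homogeneous coordinates of the five points [0:0:1], [1:0:0], [0:1:0],
[1:1:1], [ζ:1:ζ²]. -/
noncomputable def fivePts : Fin 5 → Fin 3 → ℂ :=
  ![![0, 0, 1], ![1, 0, 0], ![0, 1, 0], ![1, 1, 1], ![hesseZeta', 1, hesseZeta' ^ 2]]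

/-!
The value of a quadratic form at a coordinate point is the coefficient of the corresponding square,
so a conic through the three coordinate points has an equation `a x₁x₂ + b x₁x₃ + c x₂x₃`.
The points `[1:1:1]` and `[ω:1:ω²]` impose `a + b + c = 0` and `ω a + b + ω² c = 0`.
As `ω² + ω + 1 = 0` and `ω ≠ 1`, these two equations are equivalent to `(a, b) = (ω² c, ω c)`.
-/

section HomogeneousPolynomials

variable {σ R : Type*} [CommSemiring R]

lemma eval_piSingle_one_eq_coeff_of_isHomogeneous [DecidableEq σ] {f : MvPolynomial σ R} {n : ℕ}
    (hf : f.IsHomogeneous n) (i : σ) :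
    eval (Pi.single i 1) f = coeff (Finsupp.single i n) f := by
  rw [eval_eq, Finset.sum_eq_single (Finsupp.single i n)]
  · rw [Finset.prod_eq_one, mul_one]
    intro k hk
    rw [Finset.mem_singleton.mp (Finsupp.support_single_subset hk), Pi.single_eq_same, one_pow]
  · intro d hd hne
    obtain ⟨k, hk, hki⟩ : ∃ k ∈ d.support, k ≠ i := by
      by_contra! hsupp
      have hd_single : d = Finsupp.single i (d i) :=
        Finsupp.support_subset_singleton.mp fun k hk ↦ Finset.mem_singleton.mpr (hsupp k hk)
      have hdeg : d.degree = n := not_imp_comm.mp hf.coeff_eq_zero (mem_support_iff.mp hd)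
      rw [hd_single, Finsupp.degree_single] at hdeg
      exact hne (hdeg ▸ hd_single)
    rw [Finset.prod_eq_zero hk, mul_zero]
    rw [Pi.single_eq_of_ne hki, zero_pow (Finsupp.mem_support_iff.mp hk)]
  · intro hn
    rw [notMem_support_iff.mp hn, zero_mul]

lemma exists_le_and_eq_single_add_single_of_degree_eq_two [LinearOrder σ] {d : σ →₀ ℕ}
    (hd : d.degree = 2) :
    ∃ i j, i ≤ j ∧ d = Finsupp.single i 1 + Finsupp.single j 1 := by
  have hcard : Multiset.card d.toMultiset = 2 := by
    rwa [Finsupp.card_toMultiset]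
  obtain ⟨i, j, hij⟩ := Multiset.card_eq_two.mp hcard
  have hd_eq : d = Finsupp.single i 1 + Finsupp.single j 1 := by
    rw [← Finsupp.toMultiset_toFinsupp d, hij, Multiset.insert_eq_cons, ← Multiset.singleton_add,
      map_add, Multiset.toFinsupp_singleton, Multiset.toFinsupp_singleton]
  rcases le_total i j with hle | hle
  · exact ⟨i, j, hle, hd_eq⟩
  · exact ⟨j, i, hle, hd_eq.trans (add_comm _ _)⟩

lemma exists_lt_and_eq_single_add_single_of_mem_support [LinearOrder σ] {f : MvPolynomial σ R}
    (hf : f.IsHomogeneous 2) (hzero : ∀ i, eval (Pi.single i 1) f = 0) {d : σ →₀ ℕ}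
    (hd : d ∈ f.support) :
    ∃ i j, i < j ∧ d = Finsupp.single i 1 + Finsupp.single j 1 := by
  have hcoeff : coeff d f ≠ 0 := mem_support_iff.mp hd
  obtain ⟨i, j, hle, rfl⟩ := exists_le_and_eq_single_add_single_of_degree_eq_two
    (not_imp_comm.mp hf.coeff_eq_zero hcoeff)
  have hne : i ≠ j := by
    rintro rfl
    rw [← Finsupp.single_add, ← eval_piSingle_one_eq_coeff_of_isHomogeneous hf] at hcoeff
    exact hcoeff (hzero i)
  exact ⟨i, j, hle.lt_of_ne hne, rfl⟩

lemma eq_sum_Ioi_of_isHomogeneous_two_of_eval_piSingle_eq_zero [Fintype σ] [LinearOrder σ]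
    [LocallyFiniteOrderTop σ] {f : MvPolynomial σ R} (hf : f.IsHomogeneous 2)
    (hzero : ∀ i, eval (Pi.single i 1) f = 0) :
    f = ∑ i, ∑ j ∈ Finset.Ioi i,
      C (coeff (Finsupp.single i 1 + Finsupp.single j 1) f) * X i * X j := by
  let exponent (p : Σ _ : σ, σ) : σ →₀ ℕ := Finsupp.single p.1 1 + Finsupp.single p.2 1
  let pairs : Finset (Σ _ : σ, σ) := Finset.univ.sigma Finset.Ioi
  have hinj : Set.InjOn exponent pairs := by
    rintro ⟨i, j⟩ hij ⟨k, l⟩ hkl heq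
    simp only [pairs, Finset.coe_sigma, Set.mem_sigma_iff, Finset.mem_coe, Finset.mem_univ,
      Finset.mem_Ioi, true_and] at hij hkl
    rcases (Finsupp.single_add_single_eq_single_add_single one_ne_zero one_ne_zero).mp heq with
      ⟨rfl, rfl⟩ | ⟨-, rfl, rfl⟩ | ⟨h, -⟩
    · rfl
    · exact absurd hij hkl.asymm
    · omega
  have hsupport : f.support ⊆ pairs.image exponent := by
    intro d hd
    obtain ⟨i, j, hlt, rfl⟩ := exists_lt_and_eq_single_add_single_of_mem_support hf hzero hd
    exact Finset.mem_image.mpr ⟨⟨i, j⟩, by simpa [pairs] using hlt, rfl⟩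
  calc
    f = ∑ d ∈ f.support, monomial d (coeff d f) := f.as_sum
    _ = ∑ d ∈ pairs.image exponent, monomial d (coeff d f) :=
      Finset.sum_subset hsupport fun d _ hd ↦ by rw [notMem_support_iff.mp hd, monomial_zero]
    _ = ∑ p ∈ pairs, monomial (exponent p) (coeff (exponent p) f) := Finset.sum_image hinj
    _ = ∑ i, ∑ j ∈ Finset.Ioi i,
        C (coeff (Finsupp.single i 1 + Finsupp.single j 1) f) * X i * X j := by
      rw [Finset.sum_sigma]
      refine Finset.sum_congr rfl fun i _ ↦ Finset.sum_congr rfl fun j _ ↦ ?_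
      rw [C_mul_X_eq_monomial, X, monomial_mul, mul_one]

lemma exists_eq_cross_terms_of_isHomogeneous_two {f : MvPolynomial (Fin 3) R}
    (hf : f.IsHomogeneous 2) (hzero : ∀ i, eval (Pi.single i 1) f = 0) :
    ∃ a b c : R, f = C a * X 0 * X 1 + C b * X 0 * X 2 + C c * X 1 * X 2 := by
  have hsum := eq_sum_Ioi_of_isHomogeneous_two_of_eval_piSingle_eq_zero hf hzero
  have hIoi_zero : Finset.Ioi (0 : Fin 3) = {1, 2} := by decide
  have hIoi_one : Finset.Ioi (1 : Fin 3) = {2} := by decide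
  have hIoi_two : Finset.Ioi (2 : Fin 3) = ∅ := by decide
  rw [Fin.sum_univ_three, hIoi_zero, hIoi_one, hIoi_two, Finset.sum_pair (by decide),
    Finset.sum_singleton, Finset.sum_empty, add_zero] at hsum
  exact ⟨_, _, _, hsum⟩

end HomogeneousPolynomials

section CubeRoots

variable {R : Type*} [CommRing R]

/-- The form `ω²x₁x₂ + ωx₁x₃ + x₂x₃`, which for `ω = ζ` is `hesseConic`. -/
noncomputable def cubeRootConic (ω : R) : MvPolynomial (Fin 3) R :=
  C (ω ^ 2) * X 0 * X 1 + C ω * X 0 * X 2 + X 1 * X 2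

/-- Homogeneous coordinates of the coordinate points, `[1:1:1]` and `[ω:1:ω²]`, in an order
which for `ω = ζ` makes them `fivePts`. -/
def cubeRootPoints (ω : R) : Fin 5 → Fin 3 → R :=
  ![![0, 0, 1], ![1, 0, 0], ![0, 1, 0], ![1, 1, 1], ![ω, 1, ω ^ 2]]

variable {ω : R}

lemma eval_cubeRootPoints_cubeRootConic (hω : ω ^ 2 + ω + 1 = 0) (j : Fin 5) :
    eval (cubeRootPoints ω j) (cubeRootConic ω) = 0 := by
  fin_cases j
  · simp [cubeRootPoints, cubeRootConic]
  · simp [cubeRootPoints, cubeRootConic]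
  · simp [cubeRootPoints, cubeRootConic]
  · simpa [cubeRootPoints, cubeRootConic] using hω
  · have hroot : ω ^ 2 * ω + ω * ω * ω ^ 2 + ω ^ 2 = 0 := by linear_combination ω ^ 2 * hω
    simpa [cubeRootPoints, cubeRootConic] using hroot

lemma eval_piSingle_eq_zero_of_eval_cubeRootPoints_eq_zero {f : MvPolynomial (Fin 3) R}
    (hzero : ∀ j, eval (cubeRootPoints ω j) f = 0) (i : Fin 3) :
    eval (Pi.single i 1) f = 0 := by
  obtain ⟨j, hj⟩ : ∃ j, cubeRootPoints ω j = Pi.single i 1 := by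
    fin_cases i
    · exact ⟨1, by ext k; fin_cases k <;> rfl⟩
    · exact ⟨2, by ext k; fin_cases k <;> rfl⟩
    · exact ⟨0, by ext k; fin_cases k <;> rfl⟩
  exact hj ▸ hzero j

variable [IsDomain R]

lemma sq_add_self_add_one_eq_zero_of_isPrimitiveRoot_three (hω : IsPrimitiveRoot ω 3) :
    ω ^ 2 + ω + 1 = 0 := by
  have hgeom := hω.geom_sum_eq_zero (by norm_num)
  simp only [Finset.sum_range_succ, Finset.sum_range_zero] at hgeom
  linear_combination hgeom

lemma eq_mul_of_cubeRoot_linear_system (hω : IsPrimitiveRoot ω 3) {a b c : R}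
    (hone : a + b + c = 0) (hroot : ω * a + b + ω ^ 2 * c = 0) :
    a = c * ω ^ 2 ∧ b = c * ω := by
  have hsum := sq_add_self_add_one_eq_zero_of_isPrimitiveRoot_three hω
  have hne : ω - 1 ≠ 0 := sub_ne_zero.mpr (hω.ne_one (by norm_num))
  have hb : b = c * ω := mul_left_cancel₀ hne (by linear_combination ω * hone - hroot)
  exact ⟨by linear_combination hone - hb - c * hsum, hb⟩

theorem stmt_12_general (hω : IsPrimitiveRoot ω 3) :
    (∀ j, eval (cubeRootPoints ω j) (cubeRootConic ω) = 0) ∧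
    (∀ f : MvPolynomial (Fin 3) R, f.IsHomogeneous 2 →
      (∀ j, eval (cubeRootPoints ω j) f = 0) → ∃ c : R, f = c • cubeRootConic ω) := by
  have hsum := sq_add_self_add_one_eq_zero_of_isPrimitiveRoot_three hω
  refine ⟨eval_cubeRootPoints_cubeRootConic hsum, fun f hf hzero ↦ ?_⟩
  obtain ⟨a, b, c, rfl⟩ := exists_eq_cross_terms_of_isHomogeneous_two hf
    (eval_piSingle_eq_zero_of_eval_cubeRootPoints_eq_zero hzero)
  have hone : a + b + c = 0 := by simpa [cubeRootPoints] using hzero 3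
  have hroot : ω * a + b + ω ^ 2 * c = 0 := by
    have heval : a * ω + b * ω * ω ^ 2 + c * ω ^ 2 = 0 := by
      simpa [cubeRootPoints] using hzero 4
    linear_combination heval - b * hω.pow_eq_one
  obtain ⟨rfl, rfl⟩ := eq_mul_of_cubeRoot_linear_system hω hone hroot
  refine ⟨c, ?_⟩
  simp only [cubeRootConic, smul_eq_C_mul, C_mul]
  ring

end CubeRoots

lemma isPrimitiveRoot_hesseZeta' : IsPrimitiveRoot hesseZeta' 3 := by
  simpa [hesseZeta'] using Complex.isPrimitiveRoot_exp 3 (by norm_num)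

/-- q = ζ²x₁x₂ + ζx₁x₃ + x₂x₃ vanishes at the five points
[0:0:1], [1:0:0], [0:1:0], [1:1:1], [ζ:1:ζ²] of ℙ²(ℂ), and every homogeneous
polynomial of degree 2 in ℂ[x₁,x₂,x₃] vanishing at all five of these points is
a scalar multiple of q; in particular q = 0 is the unique conic through these
five points. -/
theorem stmt_12 :
    (∀ j : Fin 5, eval (fivePts j) hesseConic = 0) ∧
    (∀ f : MvPolynomial (Fin 3) ℂ, f.IsHomogeneous 2 →
      (∀ j : Fin 5, eval (fivePts j) f = 0) → ∃ c : ℂ, f = c • hesseConic) :=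
  stmt_12_general isPrimitiveRoot_hesseZeta'
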